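/- Let q be a prime power and let ξ be nonstandard of degree 2 over GF(q), with multiplicative order n and q-order d = ord_q(ξ). Then either d = 2, and writing n = 2e both q and (q−1)/e are odd; or d ≥ 4 and there exists a prime power q_0 and an odd positive integer t such that q = q_0^t, d = q_0 + 1, q_0 − 1 divides e = n/d, and ξ^{e/(q_0−1)} has multiplicative order q_0² − 1 (i.e., is a primitive element of the subfield GF(q_0²) of GF(q²)). -/

import Mathlib

/-!
Let `u` be an `f`-sequence that runs through `⟨ξ⟩`. As the zeros of `f` are `ξ` and `ξ ^ q`, it has
the form `u k = a (ξ ^ k) + b (ξ ^ k) ^ q` with `a + b = 1`, and `a b ≠ 0` because it is not a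
sequence of powers of a zero. So the `q`-polynomial `a x + b x ^ q` permutes `⟨ξ⟩`, and dividing it
by `x` shows that `(a + b z) ^ n = 1` for all `z` in the group `μ` of `d`-th roots of unity
generated by `ξ ^ (q - 1)`, where `d ∣ q + 1`. Raising `a + b z` to the power `q - 1` turns this
into the statement that the Möbius map `z ↦ (a ^ q z + b ^ q) / (b z + a)` preserves `μ`.

Modulo `z ^ d = 1`, the polynomials `(a ^ q z + b ^ q) ^ d` and `(b z + a) ^ d` therefore have the
same inner coefficients. Since the map has nonzero determinant, two consecutive inner binomial
coefficients of row `d` cannot both survive in characteristic `p`; this leaves `d = 2` and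
`d = q₀ + 1` with `q₀` a power of `p`. In the second case the coefficients at `z` and `z ^ q₀` show
that `a` and `b` lie in `GF(q₀²)`. Hence the norms `(a + b z) ^ (q₀ + 1)`, `z ∈ μ`, lie in
`GF(q₀)ˣ`, and as each value is taken at most twice they fill more than half of it. They are
`n`-th roots of unity, so they generate `GF(q₀)ˣ` and `q₀ - 1 ∣ n`.
-/

open Polynomial

/-- The subgroup `⟨ξ⟩ = {1, ξ, ξ², …}` of powers of an element `ξ`. -/
def powersOf {E : Type*} [Monoid E] (ξ : E) : Set E := {x | ∃ k : ℕ, x = ξ ^ k}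

/-- The map `x ↦ L₀x + L₁x^q + ⋯ + L_{m-1}x^{q^{m-1}}` given by the `q`-polynomial
with coefficient vector `c`. -/
def qPolyMap {E : Type*} [Field E] (q : ℕ) {m : ℕ} (c : Fin m → E) (x : E) : E :=
  ∑ i : Fin m, c i * x ^ q ^ (i : ℕ)

/-- `u` is a linear recurring sequence (an `f`-sequence) with characteristic polynomial
`f = xᵐ - σ_{m-1}x^{m-1} - ⋯ - σ₀`, i.e. `u_{k+m} = σ_{m-1}u_{k+m-1} + ⋯ + σ₀u_k`
where `σᵢ = -(f.coeff i)`. -/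
def IsLRS {F E : Type*} [Field F] [Field E] [Algebra F E] (f : Polynomial F) (u : ℕ → E) : Prop :=
  ∀ k : ℕ, u (k + f.natDegree) =
    ∑ i ∈ Finset.range f.natDegree, algebraMap F E (-(f.coeff i)) * u (k + i)

/-- The `q`-order of `ξ` over `F`: the least `d > 0` with `ξ ^ d ∈ F`. -/
noncomputable def qOrder (F : Type*) {E : Type*} [Field F] [Field E] [Algebra F E] (ξ : E) : ℕ :=
  sInf {d : ℕ | 0 < d ∧ ξ ^ d ∈ Set.range (algebraMap F E)}

/-- `ξ` is nonstandard of degree `m` over `F`: its minimal polynomial `f` over `F` has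
degree `m`, and `⟨ξ⟩` can be generated by an `f`-sequence `u` of smallest period `|⟨ξ⟩|`
with `u 0 = 1` and `(u_0, …, u_{m-1}) ≠ (1, ζ, …, ζ^{m-1})` for every zero `ζ` of `f`. -/
def IsNonstandard (F : Type*) {E : Type*} [Field F] [Field E] [Algebra F E]
    (m : ℕ) (ξ : E) : Prop :=
  (minpoly F ξ).natDegree = m ∧
  ∃ u : ℕ → E, IsLRS (minpoly F ξ) u ∧
    IsLeast {p : ℕ | 0 < p ∧ ∀ k, u (k + p) = u k} (orderOf ξ) ∧
    Set.range u = powersOf ξ ∧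
    u 0 = 1 ∧
    ∀ ζ : E, (aeval ζ) (minpoly F ξ) = 0 → ∃ i : Fin m, u (i : ℕ) ≠ ζ ^ (i : ℕ)

open IntermediateField

section BinomialCoefficients

theorem exists_eq_prime_pow_add_one_of_dvd_choose {p d : ℕ} (hp : p.Prime) (hpd : ¬p ∣ d)
    (hd : 2 ≤ d)
    (h : ∀ i, 0 < i → i + 1 < d → p ∣ d.choose i ∨ p ∣ d.choose (i + 1)) :
    ∃ s, d = p ^ s + 1 := by
  have := Fact.mk hp
  obtain ⟨n, rfl⟩ : ∃ n, d = n + 1 := ⟨d - 1, by omega⟩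
  -- Both entries in `h` divide a product of `n.choose i` with a unit mod `p`.
  have hrow : ∀ i ∈ Finset.Icc 1 (n - 1), n.choose i ≡ 0 [MOD p] := by
    intro i hi
    rw [Finset.mem_Icc] at hi
    have hprod : p ∣ n.choose i * (n + 1) := by
      rcases h i (by omega) (by omega) with hdvd | hdvd
      · rw [Nat.choose_mul_succ_eq]
        exact hdvd.mul_right _
      · rw [mul_comm, Nat.add_one_mul_choose_eq]
        exact hdvd.mul_right _
    exact Nat.modEq_zero_iff_dvd.mpr ((hp.dvd_mul.mp hprod).resolve_right hpd)
  exact ⟨_, congrArg (· + 1) (Choose.eq_pow_multiplicity_of_choose_modEq_zero_nat (by omega) hrow)⟩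

theorem pow_add_one_dvd_pow_two_mul_sub_one (m k : ℕ) : m ^ k + 1 ∣ m ^ (2 * k) - 1 :=
  ⟨m ^ k - 1, by simpa [pow_mul'] using Nat.sq_sub_sq (m ^ k) 1⟩

theorem dvd_of_pow_add_one_dvd_pow_add_one {m s r : ℕ} (hm : 1 < m) (hs : 0 < s)
    (h : m ^ s + 1 ∣ m ^ r + 1) : s ∣ r := by
  have hg : 0 < s.gcd r := Nat.gcd_pos_of_pos_left r hs
  have hdvd : m ^ s + 1 ∣ m ^ (2 * s.gcd r) - 1 := by
    rw [← Nat.gcd_mul_left, ← Nat.pow_sub_one_gcd_pow_sub_one]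
    exact Nat.dvd_gcd (pow_add_one_dvd_pow_two_mul_sub_one m s)
      (h.trans (pow_add_one_dvd_pow_two_mul_sub_one m r))
  have hlt : s < 2 * s.gcd r := by
    have hone : 1 < m ^ (2 * s.gcd r) := Nat.one_lt_pow (by omega) hm
    have hle := Nat.le_of_dvd (by omega) hdvd
    exact (Nat.pow_lt_pow_iff_right hm).mp (by omega)
  rw [Nat.eq_of_dvd_of_lt_two_mul hs.ne' (Nat.gcd_dvd_left s r) hlt]
  exact Nat.gcd_dvd_right s r

theorem exists_odd_mul_of_pow_add_one_dvd_pow_add_one {m s r : ℕ} (hm : 1 < m) (hs : 0 < s)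
    (h : m ^ s + 1 ∣ m ^ r + 1) : ∃ t, Odd t ∧ r = s * t := by
  obtain ⟨t, rfl⟩ := dvd_of_pow_add_one_dvd_pow_add_one hm hs h
  refine ⟨t, Nat.not_even_iff_odd.mp fun ht => ?_, rfl⟩
  obtain ⟨k, rfl⟩ := ht.two_dvd
  have hsub : m ^ s + 1 ∣ m ^ (s * (2 * k)) - 1 := by
    rw [mul_left_comm, ← mul_assoc]
    exact (pow_add_one_dvd_pow_two_mul_sub_one m s).trans
      (Nat.pow_sub_one_dvd_pow_sub_one m (dvd_mul_right ..))
  have htwo : m ^ s + 1 ∣ 2 := by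
    have hpos : 0 < m ^ (s * (2 * k)) := by positivity
    simpa [show m ^ (s * (2 * k)) + 1 - (m ^ (s * (2 * k)) - 1) = 2 by omega] using
      Nat.dvd_sub h hsub
  have hms : 1 < m ^ s := Nat.one_lt_pow hs.ne' hm
  have := Nat.le_of_dvd two_pos htwo
  omega

end BinomialCoefficients

section RootsOfUnity

variable {R : Type*} [CommRing R]

theorem coeff_C_mul_X_add_C_pow (r s : R) (n k : ℕ) :
    ((C r * X + C s) ^ n).coeff k = n.choose k * (r ^ k * s ^ (n - k)) := by
  have hcomp : (C r * X + C s) ^ n = ((X + C s) ^ n).comp (C r * X) := by simp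
  rw [hcomp, comp_C_mul_X_coeff, coeff_X_add_C_pow]
  ring

theorem coeff_eq_zero_of_forall_eval_rootsOfUnity [IsDomain R] {ζ : R} {d : ℕ}
    (hζ : IsPrimitiveRoot ζ d) {P : R[X]} (hdeg : P.natDegree ≤ d)
    (hP : ∀ z : R, z ^ d = 1 → P.eval z = 0) {i : ℕ} (hi : 0 < i) (hid : i < d) :
    P.coeff i = 0 := by
  have hQ : P - C (P.coeff d) * (X ^ d - 1) = 0 := by
    refine eq_zero_of_degree_lt_of_eval_finset_eq_zero (nthRootsFinset d (1 : R)) ?_ fun z hz => ?_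
    · rw [hζ.card_nthRootsFinset, degree_lt_iff_coeff_zero]
      intro k hk
      have hk0 : k ≠ 0 := by omega
      rcases hk.eq_or_lt with rfl | hlt
      · simp [coeff_one, hk0]
      · simp [coeff_one, coeff_X_pow, hk0, hlt.ne',
          coeff_eq_zero_of_natDegree_lt (hdeg.trans_lt hlt)]
    · rw [mem_nthRootsFinset (by omega)] at hz
      simp [hP z hz, hz]
  simpa [coeff_X_pow, coeff_one, hi.ne', hid.ne] using congrArg (coeff · i) hQ

/-- The Möbius map `z ↦ (α z + β) / (γ z + δ)` sends `d`-th roots of unity to `d`-th roots of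
unity; the condition is stated without division, so that poles need no convention. -/
def MobiusMapsRootsOfUnity (d : ℕ) (α β γ δ : R) : Prop :=
  ∀ z : R, z ^ d = 1 → (α * z + β) ^ d = (γ * z + δ) ^ d

namespace MobiusMapsRootsOfUnity

variable [IsDomain R] {ζ α β γ δ a b : R} {d p s : ℕ}

theorem choose_mul_eq_choose_mul (h : MobiusMapsRootsOfUnity d α β γ δ) (hζ : IsPrimitiveRoot ζ d)
    {i : ℕ} (hi : 0 < i) (hid : i < d) :
    (d.choose i : R) * (α ^ i * β ^ (d - i)) = d.choose i * (γ ^ i * δ ^ (d - i)) := by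
  have hdeg : ∀ r s : R, ((C r * X + C s) ^ d).natDegree ≤ d := fun r s =>
    (natDegree_pow_le_of_le d natDegree_linear_le).trans_eq (mul_one d)
  have hcoeff := coeff_eq_zero_of_forall_eval_rootsOfUnity hζ
    (P := (C α * X + C β) ^ d - (C γ * X + C δ) ^ d)
    ((natDegree_sub_le_of_le (hdeg α β) (hdeg γ δ)).trans_eq (max_self d))
    (fun z hz => by simp [h z hz]) hi hid
  rwa [coeff_sub, coeff_C_mul_X_add_C_pow, coeff_C_mul_X_add_C_pow, sub_eq_zero] at hcoeff

theorem choose_eq_zero_or_choose_succ_eq_zero (h : MobiusMapsRootsOfUnity d α β γ δ)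
    (hζ : IsPrimitiveRoot ζ d) (hα : α ≠ 0) (hβ : β ≠ 0) (hdet : α * δ ≠ β * γ) {i : ℕ}
    (hi : 0 < i) (hid : i + 1 < d) : (d.choose i : R) = 0 ∨ (d.choose (i + 1) : R) = 0 := by
  by_contra! hchoose
  obtain ⟨k, rfl⟩ : ∃ k, d = i + 1 + k := ⟨d - (i + 1), by omega⟩
  have hi_eq : α ^ i * β ^ (k + 1) = γ ^ i * δ ^ (k + 1) := by
    simpa [show i + 1 + k - i = k + 1 by omega] using
      mul_left_cancel₀ hchoose.1 (h.choose_mul_eq_choose_mul hζ hi (by omega))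
  have hsucc_eq : α ^ (i + 1) * β ^ k = γ ^ (i + 1) * δ ^ k := by
    simpa using mul_left_cancel₀ hchoose.2 (h.choose_mul_eq_choose_mul hζ (by omega) hid)
  refine hdet (mul_left_cancel₀ (mul_ne_zero (pow_ne_zero i hα) (pow_ne_zero k hβ)) ?_)
  linear_combination δ * hsucc_eq - γ * hi_eq

variable [Fact p.Prime] [CharP R p]

theorem exists_eq_prime_pow_add_one (h : MobiusMapsRootsOfUnity d α β γ δ)
    (hζ : IsPrimitiveRoot ζ d) (hα : α ≠ 0) (hβ : β ≠ 0) (hdet : α * δ ≠ β * γ) (hd : 3 ≤ d) :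
    4 ≤ d ∧ ∃ s, 0 < s ∧ d = p ^ s + 1 := by
  have hd0 : NeZero d := ⟨by omega⟩
  have hpd : ¬p ∣ d := by
    rw [← CharP.cast_eq_zero_iff R p]
    exact hζ.neZero'.ne
  have hchoose : ∀ i, 0 < i → i + 1 < d → p ∣ d.choose i ∨ p ∣ d.choose (i + 1) := by
    simp only [← CharP.cast_eq_zero_iff R p]
    exact fun i => h.choose_eq_zero_or_choose_succ_eq_zero hζ hα hβ hdet
  have hd3 : d ≠ 3 := by
    rintro rfl
    exact (hchoose 1 one_pos (by simp)).elim hpd hpd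
  obtain ⟨s, hs⟩ := exists_eq_prime_pow_add_one_of_dvd_choose Fact.out hpd (by omega) hchoose
  refine ⟨by omega, s, Nat.pos_of_ne_zero ?_, hs⟩
  rintro rfl
  simp [hs] at hd

theorem eq_pow_prime_pow (h : MobiusMapsRootsOfUnity (p ^ s + 1) α β b a)
    (hζ : IsPrimitiveRoot ζ (p ^ s + 1)) (hdet : α * a ≠ β * b) (hαβ : α + β = 1)
    (hab : a + b = 1) : α = a ^ p ^ s ∧ β = b ^ p ^ s := by
  have hps : 0 < p ^ s := pow_pos (Fact.out : p.Prime).pos s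
  have hd : ((p ^ s + 1 : ℕ) : R) ≠ 0 := hζ.neZero'.ne
  have hone : α * β ^ p ^ s = b * a ^ p ^ s := by
    have := h.choose_mul_eq_choose_mul hζ one_pos (by omega)
    rw [Nat.choose_one_right] at this
    simpa using mul_left_cancel₀ hd this
  have hlast : α ^ p ^ s * β = b ^ p ^ s * a := by
    have := h.choose_mul_eq_choose_mul hζ hps (by omega)
    rw [Nat.choose_succ_self_right] at this
    simpa using mul_left_cancel₀ hd this
  obtain rfl : β = 1 - α := by linear_combination hαβ
  obtain rfl : b = 1 - a := by linear_combination hab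
  rw [sub_pow_char_pow, one_pow] at *
  have hfactor : (1 - (α + a)) * (α - a ^ p ^ s) = 0 := by
    linear_combination (1 - α) * hone + α * hlast
  have hα : α = a ^ p ^ s := by
    refine sub_eq_zero.mp ((mul_eq_zero.mp hfactor).resolve_left fun hsum => hdet ?_)
    linear_combination -hsum
  exact ⟨hα, by rw [hα]⟩

end MobiusMapsRootsOfUnity

section NormCounting

variable [IsDomain R] {p s : ℕ} [Fact p.Prime] [CharP R p] {a b ζ : R}

/- On `(q₀ + 1)`-th roots of unity `z`, conjugation inverts `z`, so `(a + b z) ^ (q₀ + 1) = y` is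
a quadratic equation in `z`. -/
theorem card_filter_add_mul_pow_eq_le_two [DecidableEq R] (ha : a ≠ 0) (hb : b ≠ 0) (y : R) :
    ((nthRootsFinset (p ^ s + 1) (1 : R)).filter fun z => (a + b * z) ^ (p ^ s + 1) = y).card
      ≤ 2 := by
  set P : R[X] := C (b * a ^ p ^ s) * X ^ 2 +
    C (a * a ^ p ^ s + b * b ^ p ^ s - y) * X + C (a * b ^ p ^ s) with hP
  have hdeg : P.natDegree = 2 := natDegree_quadratic (mul_ne_zero hb (pow_ne_zero _ ha))
  have hP0 : P ≠ 0 := ne_zero_of_natDegree_gt (hdeg ▸ two_pos)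
  rw [← hdeg]
  refine card_le_degree_of_subset_roots fun z hz => (mem_roots hP0).mpr ?_
  obtain ⟨hz1, hzy⟩ := Finset.mem_filter.mp hz
  rw [mem_nthRootsFinset (Nat.succ_pos _), pow_succ] at hz1
  rw [pow_succ, add_pow_char_pow, mul_pow] at hzy
  simp only [hP, IsRoot.def, eval_add, eval_mul, eval_C, eval_pow, eval_X]
  linear_combination z * hzy - b ^ p ^ s * (a + b * z) * hz1

theorem prime_pow_sub_one_dvd_of_forall_pow_eq_one (hζ : IsPrimitiveRoot ζ (p ^ s + 1))
    (hs : 0 < s) (ha : a ≠ 0) (hb : b ≠ 0) {n : ℕ}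
    (hfix : ∀ z, z ^ (p ^ s + 1) = 1 → ((a + b * z) ^ (p ^ s + 1)) ^ (p ^ s - 1) = 1)
    (hn : ∀ z, z ^ (p ^ s + 1) = 1 → (a + b * z) ^ n = 1) : p ^ s - 1 ∣ n := by
  classical
  have hps : 1 < p ^ s := Nat.one_lt_pow hs.ne' (Fact.out : p.Prime).one_lt
  set g := n.gcd (p ^ s - 1) with hg
  have hg0 : 0 < g := Nat.gcd_pos_of_pos_right n (by omega)
  set norms := (nthRootsFinset (p ^ s + 1) (1 : R)).image fun z => (a + b * z) ^ (p ^ s + 1)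
  have hnorms_subset : norms ⊆ nthRootsFinset g (1 : R) := by
    refine Finset.image_subset_iff.mpr fun z hz => ?_
    rw [mem_nthRootsFinset (Nat.succ_pos _)] at hz
    rw [mem_nthRootsFinset hg0, hg, pow_gcd_eq_one]
    exact ⟨by rw [pow_right_comm, hn z hz, one_pow], hfix z hz⟩
  have hlower : p ^ s + 1 ≤ 2 * norms.card := by
    rw [← hζ.card_nthRootsFinset]
    exact Finset.card_le_mul_card_image _ 2 fun y _ => card_filter_add_mul_pow_eq_le_two ha hb y
  have hupper : norms.card ≤ g := by
    refine (Finset.card_le_card hnorms_subset).trans ?_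
    rw [nthRootsFinset_def]
    exact (Multiset.toFinset_card_le _).trans (card_nthRoots g 1)
  have hgdvd : g ∣ p ^ s - 1 := Nat.gcd_dvd_right n _
  rw [Nat.eq_of_dvd_of_lt_two_mul (by omega) hgdvd (by omega)]
  exact Nat.gcd_dvd_left n _

end NormCounting

end RootsOfUnity

section Frobenius

variable {F E : Type*} [Field F] [Fintype F] [Field E] [Algebra F E] {ξ : E}

theorem mem_range_algebraMap_iff_pow_card_eq_self (x : E) :
    x ∈ Set.range (algebraMap F E) ↔ x ^ Fintype.card F = x := by
  refine ⟨?_, fun hx => ?_⟩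
  · rintro ⟨y, rfl⟩
    rw [← map_pow, FiniteField.pow_card]
  · have hsplits : (X ^ Fintype.card F - X : F[X]).Splits := by
      simpa using IsSplittingField.splits F (X ^ Fintype.card F - X : F[X])
    exact hsplits.mem_range_of_isRoot (FiniteField.X_pow_card_sub_X_ne_zero F Fintype.one_lt_card)
      (by simp [hx])

theorem qOrder_eq_orderOf_pow_card_sub_one (hξ : ξ ≠ 0) :
    qOrder F ξ = orderOf (ξ ^ (Fintype.card F - 1)) := by
  have hmem : ∀ k, ξ ^ k ∈ Set.range (algebraMap F E) ↔ (ξ ^ (Fintype.card F - 1)) ^ k = 1 := by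
    intro k
    rw [mem_range_algebraMap_iff_pow_card_eq_self, pow_right_comm,
      ← pow_sub_one_mul Fintype.card_ne_zero, mul_pow, mul_eq_right₀ (pow_ne_zero k hξ)]
  simp only [qOrder, hmem, orderOf, Function.minimalPeriod_eq_sInf_n_pos_IsPeriodicPt,
    isPeriodicPt_mul_iff_pow_eq_one, gt_iff_lt]

theorem pow_card_pow_natDegree_minpoly (hξ : IsIntegral F ξ) :
    ξ ^ Fintype.card F ^ (minpoly F ξ).natDegree = ξ := by
  have := IntermediateField.adjoin.finiteDimensional hξ
  have := Module.finite_of_finite F (M := F⟮ξ⟯)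
  have := Fintype.ofFinite F⟮ξ⟯
  have hgen := FiniteField.pow_card (IntermediateField.AdjoinSimple.gen F ξ)
  rw [Module.card_eq_pow_finrank (K := F), IntermediateField.adjoin.finrank hξ] at hgen
  simpa using congrArg (algebraMap F⟮ξ⟯ E) hgen

theorem injective_pow_card_pow_natDegree_minpoly (hξ : IsIntegral F ξ) :
    Function.Injective fun i : Fin (minpoly F ξ).natDegree => ξ ^ Fintype.card F ^ (i : ℕ) := by
  have := IntermediateField.adjoin.finiteDimensional hξ
  have := Module.finite_of_finite F (M := F⟮ξ⟯)
  set σ := FiniteField.frobeniusAlgHom F F⟮ξ⟯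
  have hσ : orderOf σ = (minpoly F ξ).natDegree := by
    rw [FiniteField.orderOf_frobeniusAlgHom, IntermediateField.adjoin.finrank hξ]
  intro i j hij
  refine Fin.ext (pow_injOn_Iio_orderOf (x := σ) (by simp [hσ]) (by simp [hσ]) ?_)
  refine (IntermediateField.adjoin.powerBasis hξ).algHom_ext ?_
  refine Subtype.ext ?_
  simpa [σ, AlgHom.coe_pow, FiniteField.coe_frobeniusAlgHom, pow_iterate] using hij

theorem aeval_pow_card_pow_minpoly (i : ℕ) :
    aeval (ξ ^ Fintype.card F ^ i) (minpoly F ξ) = 0 := by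
  have hσ : (FiniteField.frobeniusAlgHom F E ^ i) ξ = ξ ^ Fintype.card F ^ i := by
    rw [AlgHom.coe_pow, FiniteField.coe_frobeniusAlgHom, pow_iterate]
  rw [← hσ, aeval_algHom_apply, minpoly.aeval, map_zero]

end Frobenius

section LinearRecurrence

variable {F E : Type*} [Field F] [Field E] [Algebra F E] {f : F[X]}

variable (E) in
/-- The recurrence behind `IsLRS f` as an object of Mathlib's theory of linear recurrences. -/
def linearRecurrenceOfPolynomial (f : F[X]) : LinearRecurrence E where
  order := f.natDegree
  coeffs i := algebraMap F E (-f.coeff i)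

theorem isLRS_iff_isSolution {u : ℕ → E} :
    IsLRS f u ↔ (linearRecurrenceOfPolynomial E f).IsSolution u := by
  simp only [IsLRS, Finset.sum_range]
  rfl

theorem isLRS_pow_of_aeval_eq_zero (hf : f.Monic) {ζ : E} (hζ : aeval ζ f = 0) :
    IsLRS f (ζ ^ ·) := by
  intro k
  rw [hf.as_sum] at hζ
  simp only [map_add, map_pow, map_sum, map_mul, aeval_X, aeval_C] at hζ
  simp only [map_neg, neg_mul, Finset.sum_neg_distrib, pow_add, mul_left_comm _ (ζ ^ k),
    ← Finset.mul_sum]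
  linear_combination ζ ^ k * hζ

theorem IsLRS.exists_eq_sum_mul_pow (hf : f.Monic) {u : ℕ → E} (hu : IsLRS f u)
    {α : Fin f.natDegree → E} (hinj : Function.Injective α) (hα : ∀ i, aeval (α i) f = 0) :
    ∃ c : Fin f.natDegree → E, ∀ k, u k = ∑ i, c i * α i ^ k := by
  have hunit : IsUnit (Matrix.vandermonde α) := by
    rw [Matrix.isUnit_iff_isUnit_det, isUnit_iff_ne_zero]
    exact Matrix.det_vandermonde_ne_zero_iff.mpr hinj
  obtain ⟨c, hc⟩ := Matrix.vecMul_surjective_iff_isUnit.mpr hunit fun k => u k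
  have hsol : (fun k => ∑ i, c i * α i ^ k) ∈ (linearRecurrenceOfPolynomial E f).solSpace := by
    have hgeom : ∀ i, (α i ^ ·) ∈ (linearRecurrenceOfPolynomial E f).solSpace := fun i =>
      isLRS_iff_isSolution.mp (isLRS_pow_of_aeval_eq_zero hf (hα i))
    convert Submodule.sum_mem _ fun i (_ : i ∈ Finset.univ) => Submodule.smul_mem _ (c i) (hgeom i)
    simp
  refine ⟨c, congrFun ?_⟩
  refine ((linearRecurrenceOfPolynomial E f).eq_iff_eqOn_range_order _ _
    (isLRS_iff_isSolution.mp hu)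
    ((LinearRecurrence.is_sol_iff_mem_solSpace _ _).mpr hsol)).mpr fun k hk => ?_
  have := congrFun hc ⟨k, Finset.mem_range.mp hk⟩
  simpa [Matrix.vecMul, dotProduct, Matrix.vandermonde] using this.symm

theorem IsLRS.exists_eq_qPolyMap_pow [Fintype F] {ξ : E} (hξ : IsIntegral F ξ) {m : ℕ}
    (hm : (minpoly F ξ).natDegree = m) {u : ℕ → E} (hu : IsLRS (minpoly F ξ) u) :
    ∃ c : Fin m → E, ∀ k, u k = qPolyMap (Fintype.card F) c (ξ ^ k) := by
  subst hm
  obtain ⟨c, hc⟩ := hu.exists_eq_sum_mul_pow (minpoly.monic hξ)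
    (injective_pow_card_pow_natDegree_minpoly hξ) fun i => aeval_pow_card_pow_minpoly i
  refine ⟨c, fun k => ?_⟩
  simp only [hc, qPolyMap, pow_right_comm ξ k]

end LinearRecurrence

section OrderOfPow

theorem orderOf_eq_orderOf_pow_mul_gcd {M : Type*} [Monoid M] {x : M} (hx : IsOfFinOrder x)
    (k : ℕ) : orderOf x = orderOf (x ^ k) * (orderOf x).gcd k := by
  rw [hx.orderOf_pow, Nat.div_mul_cancel (Nat.gcd_dvd_left ..)]

theorem pow_add_one_pow_sub_one_eq_one {M : Type*} [MonoidWithZero M] [IsRightCancelMulZero M]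
    {x : M} (hx : x ≠ 0) {q : ℕ} (hq : 0 < q) (h : (x ^ q) ^ q = x) :
    (x ^ (q + 1)) ^ (q - 1) = 1 := by
  obtain ⟨k, rfl⟩ := Nat.exists_eq_add_of_le' hq
  refine mul_right_cancel₀ hx ?_
  rw [one_mul, ← pow_mul, ← pow_succ]
  rw [← pow_mul] at h
  convert h using 2
  rw [Nat.add_sub_cancel]
  ring

end OrderOfPow

section PermutingQPolynomials

variable {E : Type*} [Field E]

/-- The normalized `q`-polynomial `x ↦ a x + b x ^ q`, with both coefficients nonzero, maps the
group generated by `ξ ∈ GF(q²) \ GF(q)` onto itself. Membership in `GF(q²)` is expressed by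
invariance under the square of the `q`-power map. -/
structure IsPermutingQPolynomial (q : ℕ) (ξ a b : E) : Prop where
  pow_pow_self : (ξ ^ q) ^ q = ξ
  pow_ne_self : ξ ^ q ≠ ξ
  left_ne_zero : a ≠ 0
  right_ne_zero : b ≠ 0
  add_eq_one : a + b = 1
  pow_pow_left : (a ^ q) ^ q = a
  image_powersOf : (fun x => a * x + b * x ^ q) '' powersOf ξ = powersOf ξ

namespace IsPermutingQPolynomial

variable {ξ a b z : E} {p r s : ℕ} [Fact p.Prime]

theorem ne_zero (h : IsPermutingQPolynomial (p ^ r) ξ a b) : ξ ≠ 0 := by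
  rintro rfl
  exact h.pow_ne_self (zero_pow (NeZero.ne _))

theorem isOfFinOrder (h : IsPermutingQPolynomial (p ^ r) ξ a b) : IsOfFinOrder ξ := by
  have hq : 1 < p ^ r := Nat.one_lt_pow (fun hr => h.pow_ne_self (by simp [hr]))
    (Fact.out : p.Prime).one_lt
  refine isOfFinOrder_iff_pow_eq_one.mpr ⟨(p ^ r + 1) * (p ^ r - 1), by simp [hq], ?_⟩
  rw [pow_mul, pow_add_one_pow_sub_one_eq_one h.ne_zero (NeZero.pos _) h.pow_pow_self]

theorem orderOf_pow_sub_one_dvd (h : IsPermutingQPolynomial (p ^ r) ξ a b) :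
    orderOf (ξ ^ (p ^ r - 1)) ∣ p ^ r + 1 := by
  refine orderOf_dvd_of_pow_eq_one ?_
  rw [pow_right_comm]
  exact pow_add_one_pow_sub_one_eq_one h.ne_zero (NeZero.pos _) h.pow_pow_self

theorem orderOf_pow_sub_one_ne_one (h : IsPermutingQPolynomial (p ^ r) ξ a b) :
    orderOf (ξ ^ (p ^ r - 1)) ≠ 1 := by
  rw [Ne, orderOf_eq_one_iff]
  intro hone
  apply h.pow_ne_self
  rw [← pow_sub_one_mul (NeZero.ne _), hone, one_mul]

theorem add_mul_pow_orderOf_eq_one (h : IsPermutingQPolynomial (p ^ r) ξ a b)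
    (hz : z ^ orderOf (ξ ^ (p ^ r - 1)) = 1) : (a + b * z) ^ orderOf ξ = 1 := by
  have : NeZero (orderOf (ξ ^ (p ^ r - 1))) := ⟨h.isOfFinOrder.pow.orderOf_pos.ne'⟩
  obtain ⟨k, -, rfl⟩ := (IsPrimitiveRoot.orderOf _).eq_pow_of_pow_eq_one hz
  obtain ⟨j, hj⟩ := h.image_powersOf.subset ⟨ξ ^ k, ⟨k, rfl⟩, rfl⟩
  have hfactor : ξ ^ k * (a + b * (ξ ^ (p ^ r - 1)) ^ k) = ξ ^ j := by
    rw [← hj]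
    beta_reduce
    rw [← mul_pow_sub_one (NeZero.ne (p ^ r)) (ξ ^ k), pow_right_comm]
    ring
  have := congrArg (· ^ orderOf ξ) hfactor
  simpa only [mul_pow, pow_right_comm ξ _ (orderOf ξ), pow_orderOf_eq_one, one_pow, one_mul]
    using this

theorem exists_orderOf_eq_two_mul (h : IsPermutingQPolynomial (p ^ r) ξ a b)
    (hd : orderOf (ξ ^ (p ^ r - 1)) = 2) :
    ∃ e, orderOf ξ = 2 * e ∧ Odd (p ^ r) ∧ Odd ((p ^ r - 1) / e) := by
  have hn := orderOf_eq_orderOf_pow_mul_gcd h.isOfFinOrder (p ^ r - 1)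
  have hg : 0 < (orderOf ξ).gcd (p ^ r - 1) := Nat.gcd_pos_of_pos_left _ h.isOfFinOrder.orderOf_pos
  rw [hd] at hn
  refine ⟨_, hn, ?_, ?_⟩
  · have := hd ▸ h.orderOf_pow_sub_one_dvd
    rwa [← even_iff_two_dvd, Nat.even_add_one, Nat.not_even_iff_odd] at this
  · rw [← Nat.coprime_two_left, ← Nat.div_eq_of_eq_mul_left hg hn]
    exact Nat.coprime_div_gcd_div_gcd hg

theorem exists_odd_eq_pow (h : IsPermutingQPolynomial (p ^ r) ξ a b)
    (hs : 0 < s) (hd : orderOf (ξ ^ (p ^ r - 1)) = p ^ s + 1) :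
    ∃ t, Odd t ∧ p ^ r = (p ^ s) ^ t := by
  obtain ⟨t, ht, rfl⟩ := exists_odd_mul_of_pow_add_one_dvd_pow_add_one
    (Fact.out : p.Prime).one_lt hs (hd ▸ h.orderOf_pow_sub_one_dvd)
  exact ⟨t, ht, pow_mul ..⟩

variable [CharP E p]

theorem pow_pow_right (h : IsPermutingQPolynomial (p ^ r) ξ a b) : (b ^ p ^ r) ^ p ^ r = b := by
  obtain rfl : b = 1 - a := by linear_combination h.add_eq_one
  simp only [sub_pow_char_pow, one_pow, h.pow_pow_left]

/- If the determinant of the Möbius map vanished, then `b = a ^ q`, so `a x + b x ^ q` would be a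
trace and hence lie in `GF(q)`. -/
theorem pow_mul_left_ne_pow_mul_right (h : IsPermutingQPolynomial (p ^ r) ξ a b) :
    a ^ p ^ r * a ≠ b ^ p ^ r * b := by
  intro hdet
  have hsum : a ^ p ^ r + b ^ p ^ r = 1 := by
    rw [← add_pow_char_pow, h.add_eq_one, one_pow]
  have hb : b = a ^ p ^ r := by
    linear_combination (1 - b ^ p ^ r) * h.add_eq_one + (a - 1) * hsum - hdet
  have hξ : ξ ∈ powersOf ξ := ⟨1, (pow_one ξ).symm⟩
  obtain ⟨_, ⟨k, rfl⟩, hk⟩ := h.image_powersOf.superset hξ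
  refine h.pow_ne_self ?_
  rw [← hk]
  beta_reduce
  rw [add_pow_char_pow, mul_pow, mul_pow, ← hb, hb, h.pow_pow_left, pow_right_comm ξ k,
    pow_right_comm (ξ ^ p ^ r) k, h.pow_pow_self, add_comm]

theorem mobiusMapsRootsOfUnity (h : IsPermutingQPolynomial (p ^ r) ξ a b) :
    MobiusMapsRootsOfUnity (orderOf (ξ ^ (p ^ r - 1))) (a ^ p ^ r) (b ^ p ^ r) b a := by
  intro z hz
  set d := orderOf (ξ ^ (p ^ r - 1))
  have hzq : z * z ^ p ^ r = 1 := by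
    rw [← pow_succ', ← orderOf_dvd_iff_pow_eq_one]
    exact (orderOf_dvd_of_pow_eq_one hz).trans h.orderOf_pow_sub_one_dvd
  have hn : orderOf ξ ∣ (p ^ r - 1) * d := by
    rw [orderOf_dvd_iff_pow_eq_one, pow_mul, pow_orderOf_eq_one]
  have hy : ((a + b * z) ^ (p ^ r - 1)) ^ d = 1 := by
    rw [← pow_mul, ← orderOf_dvd_iff_pow_eq_one]
    exact (orderOf_dvd_of_pow_eq_one (h.add_mul_pow_orderOf_eq_one hz)).trans hn
  calc (a ^ p ^ r * z + b ^ p ^ r) ^ d = (z * (a + b * z) ^ p ^ r) ^ d := by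
        congr 1
        rw [add_pow_char_pow, mul_pow]
        linear_combination -b ^ p ^ r * hzq
    _ = (b * z + a) ^ d := by
        rw [mul_pow, hz, one_mul, ← pow_sub_one_mul (NeZero.ne (p ^ r)), mul_pow, hy, one_mul,
          add_comm]

theorem exists_orderOf_pow_sub_one_eq (h : IsPermutingQPolynomial (p ^ r) ξ a b)
    (hd : 3 ≤ orderOf (ξ ^ (p ^ r - 1))) : 4 ≤ orderOf (ξ ^ (p ^ r - 1)) ∧
      ∃ s, 0 < s ∧ orderOf (ξ ^ (p ^ r - 1)) = p ^ s + 1 :=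
  h.mobiusMapsRootsOfUnity.exists_eq_prime_pow_add_one (IsPrimitiveRoot.orderOf _)
    (pow_ne_zero _ h.left_ne_zero) (pow_ne_zero _ h.right_ne_zero)
    h.pow_mul_left_ne_pow_mul_right hd

theorem pow_prime_pow_pow_prime_pow (h : IsPermutingQPolynomial (p ^ r) ξ a b)
    (hd : orderOf (ξ ^ (p ^ r - 1)) = p ^ s + 1) :
    (a ^ p ^ s) ^ p ^ s = a ∧ (b ^ p ^ s) ^ p ^ s = b := by
  have hmob := h.mobiusMapsRootsOfUnity
  have hζ := IsPrimitiveRoot.orderOf (ξ ^ (p ^ r - 1))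
  rw [hd] at hmob hζ
  obtain ⟨ha, hb⟩ := hmob.eq_pow_prime_pow hζ h.pow_mul_left_ne_pow_mul_right
    (by rw [← add_pow_char_pow, h.add_eq_one, one_pow]) h.add_eq_one
  rw [← ha, ← hb, pow_right_comm a, pow_right_comm b, ← ha, ← hb]
  exact ⟨h.pow_pow_left, h.pow_pow_right⟩

theorem prime_pow_sub_one_dvd_orderOf (h : IsPermutingQPolynomial (p ^ r) ξ a b)
    (hs : 0 < s) (hd : orderOf (ξ ^ (p ^ r - 1)) = p ^ s + 1) : p ^ s - 1 ∣ orderOf ξ := by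
  obtain ⟨ha, hb⟩ := h.pow_prime_pow_pow_prime_pow hd
  have hn : ∀ z : E, z ^ (p ^ s + 1) = 1 → (a + b * z) ^ orderOf ξ = 1 := fun z hz =>
    h.add_mul_pow_orderOf_eq_one (hd ▸ hz)
  refine prime_pow_sub_one_dvd_of_forall_pow_eq_one (hd ▸ IsPrimitiveRoot.orderOf _) hs
    h.left_ne_zero h.right_ne_zero (fun z hz => ?_) hn
  have hz2 : (z ^ p ^ s) ^ p ^ s = z := by
    have hinv : z ^ p ^ s = z⁻¹ := eq_inv_of_mul_eq_one_left (by rw [← pow_succ, hz])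
    rw [hinv, inv_pow, hinv, inv_inv]
  refine pow_add_one_pow_sub_one_eq_one ?_ (NeZero.pos _) ?_
  · exact (IsUnit.of_pow_eq_one (hn z hz) h.isOfFinOrder.orderOf_pos.ne').ne_zero
  · rw [add_pow_char_pow, add_pow_char_pow, mul_pow, mul_pow, ha, hb, hz2]

theorem prime_pow_sub_one_dvd_orderOf_div (h : IsPermutingQPolynomial (p ^ r) ξ a b)
    (hs : 0 < s) (hd : orderOf (ξ ^ (p ^ r - 1)) = p ^ s + 1) :
    p ^ s - 1 ∣ orderOf ξ / orderOf (ξ ^ (p ^ r - 1)) := by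
  obtain ⟨t, -, ht⟩ := h.exists_odd_eq_pow hs hd
  rw [Nat.div_eq_of_eq_mul_right h.isOfFinOrder.pow.orderOf_pos
    (orderOf_eq_orderOf_pow_mul_gcd h.isOfFinOrder (p ^ r - 1))]
  refine Nat.dvd_gcd (h.prime_pow_sub_one_dvd_orderOf hs hd) ?_
  rw [ht]
  exact Nat.sub_one_dvd_pow_sub_one _ t

theorem orderOf_pow_div_eq_sq_sub_one (h : IsPermutingQPolynomial (p ^ r) ξ a b)
    (hs : 0 < s) (hd : orderOf (ξ ^ (p ^ r - 1)) = p ^ s + 1) :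
    orderOf (ξ ^ (orderOf ξ / orderOf (ξ ^ (p ^ r - 1)) / (p ^ s - 1))) = (p ^ s) ^ 2 - 1 := by
  have hmul : orderOf (ξ ^ (p ^ r - 1)) * (p ^ s - 1) = (p ^ s) ^ 2 - 1 := by
    rw [hd, ← Nat.sq_sub_sq, one_pow]
  have hdvd := Nat.mul_dvd_of_dvd_div (orderOf_pow_dvd _)
    (h.prime_pow_sub_one_dvd_orderOf_div hs hd)
  rw [Nat.div_div_eq_div_mul, ← hmul]
  exact orderOf_pow_orderOf_div h.isOfFinOrder.orderOf_pos.ne' hdvd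

end IsPermutingQPolynomial

end PermutingQPolynomials

section Nonstandard

variable {F E : Type*} [Field F] [Fintype F] [Field E] [Algebra F E] {ξ : E}

theorem powersOf_eq_range {M : Type*} [Monoid M] (x : M) : powersOf x = Set.range (x ^ ·) :=
  Set.ext fun _ => exists_congr fun _ => eq_comm

theorem map_eq_self_of_map_add_mul_eq_self {K : Type*} [Field K] {τ : K →+* K} {a b x y : K}
    (hx : τ x = x) (hy : τ y = y) (hxy : x ≠ y) (hab : a + b = 1)
    (h : τ (a * x + b * y) = a * x + b * y) : τ a = a := by
  obtain rfl : b = 1 - a := by linear_combination hab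
  simp only [map_add, map_mul, map_sub, map_one, hx, hy] at h
  refine mul_right_cancel₀ (sub_ne_zero.mpr hxy) ?_
  linear_combination h

theorem pow_card_pow_card_eq_self_of_mem_powersOf {a b : E}
    (hξ : (ξ ^ Fintype.card F) ^ Fintype.card F = ξ) (hne : ξ ^ Fintype.card F ≠ ξ)
    (hab : a + b = 1) (h : a * ξ + b * ξ ^ Fintype.card F ∈ powersOf ξ) :
    (a ^ Fintype.card F) ^ Fintype.card F = a := by
  let τ : E →+* E := (FiniteField.frobeniusAlgHom F E ^ 2).toRingHom
  have hτ : ∀ x, τ x = (x ^ Fintype.card F) ^ Fintype.card F := fun _ => rfl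
  have hτξ : τ ξ = ξ := (hτ ξ).trans hξ
  obtain ⟨k, hk⟩ := h
  rw [← hτ]
  refine map_eq_self_of_map_add_mul_eq_self hτξ ?_ hne.symm hab ?_
  · rw [map_pow, hτξ]
  · rw [hk, map_pow, hτξ]

theorem IsNonstandard.exists_isPermutingQPolynomial (h : IsNonstandard F 2 ξ) :
    ∃ a b, IsPermutingQPolynomial (Fintype.card F) ξ a b := by
  obtain ⟨hdeg, u, hu, -, hrange, hu0, hne⟩ := h
  have hξ : IsIntegral F ξ := by
    by_contra hξ
    simp [minpoly.eq_zero hξ] at hdeg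
  have hq2 : (ξ ^ Fintype.card F) ^ Fintype.card F = ξ := by
    rw [← pow_mul, ← sq, ← hdeg, pow_card_pow_natDegree_minpoly hξ]
  have hq : ξ ^ Fintype.card F ≠ ξ := by
    rw [Ne, ← mem_range_algebraMap_iff_pow_card_eq_self (F := F)]
    intro hmem
    simp [minpoly.natDegree_eq_one_iff.mpr hmem] at hdeg
  obtain ⟨c, hc⟩ := hu.exists_eq_qPolyMap_pow hξ hdeg
  obtain ⟨a, b, hab⟩ : ∃ a b : E, ∀ k, u k = a * ξ ^ k + b * (ξ ^ k) ^ Fintype.card F :=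
    ⟨c 0, c 1, fun k => by simp [hc, qPolyMap]⟩
  have hsum : a + b = 1 := by simpa [hu0] using (hab 0).symm
  refine ⟨a, b, hq2, hq, ?_, ?_, hsum, ?_, ?_⟩
  · rintro rfl
    obtain ⟨i, hi⟩ := hne (ξ ^ Fintype.card F)
      (by simpa using aeval_pow_card_pow_minpoly (F := F) (ξ := ξ) 1)
    obtain rfl : b = 1 := by simpa using hsum
    exact hi (by simp [hab, pow_right_comm])
  · rintro rfl
    obtain ⟨i, hi⟩ := hne ξ (minpoly.aeval F ξ)
    obtain rfl : a = 1 := by simpa using hsum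
    exact hi (by simp [hab])
  · refine pow_card_pow_card_eq_self_of_mem_powersOf hq2 hq hsum ?_
    rw [← hrange]
    exact ⟨1, by simp [hab]⟩
  · calc (fun x => a * x + b * x ^ Fintype.card F) '' powersOf ξ
        = Set.range fun k => a * ξ ^ k + b * (ξ ^ k) ^ Fintype.card F := by
          rw [powersOf_eq_range, ← Set.range_comp']
      _ = Set.range u := congrArg Set.range (funext fun k => (hab k).symm)
      _ = powersOf ξ := hrange

end Nonstandard

theorem nonstandard_degree_two_classification_general {F E : Type*} [Field F] [Fintype F]
    [Field E] [Algebra F E] (ξ : E) (hns : IsNonstandard F 2 ξ) :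
    (qOrder F ξ = 2 ∧ ∃ e : ℕ, orderOf ξ = 2 * e ∧ Odd (Fintype.card F) ∧
        Odd ((Fintype.card F - 1) / e)) ∨
    (4 ≤ qOrder F ξ ∧ ∃ q0 t : ℕ, IsPrimePow q0 ∧ Odd t ∧
        Fintype.card F = q0 ^ t ∧ qOrder F ξ = q0 + 1 ∧
        (q0 - 1) ∣ orderOf ξ / qOrder F ξ ∧
        orderOf (ξ ^ (orderOf ξ / qOrder F ξ / (q0 - 1))) = q0 ^ 2 - 1) := by
  obtain ⟨p, hcharF⟩ := CharP.exists F
  obtain ⟨r, hp, hcard⟩ := FiniteField.card F p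
  have := Fact.mk hp
  have : CharP E p := charP_of_injective_algebraMap (algebraMap F E).injective p
  obtain ⟨a, b, h⟩ := hns.exists_isPermutingQPolynomial
  rw [hcard] at h
  rw [qOrder_eq_orderOf_pow_card_sub_one h.ne_zero, hcard]
  have hpos := h.isOfFinOrder.pow (n := p ^ (r : ℕ) - 1) |>.orderOf_pos
  have hne_one := h.orderOf_pow_sub_one_ne_one
  obtain hd | hd : orderOf (ξ ^ (p ^ (r : ℕ) - 1)) = 2 ∨ 3 ≤ orderOf (ξ ^ (p ^ (r : ℕ) - 1)) := by
    omega
  · exact .inl ⟨hd, h.exists_orderOf_eq_two_mul hd⟩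
  · obtain ⟨hd4, s, hs, hds⟩ := h.exists_orderOf_pow_sub_one_eq hd
    obtain ⟨t, ht, hpow⟩ := h.exists_odd_eq_pow hs hds
    exact .inr ⟨hd4, p ^ s, t, hp.isPrimePow.pow hs.ne', ht, hpow, hds,
      h.prime_pow_sub_one_dvd_orderOf_div hs hds, h.orderOf_pow_div_eq_sq_sub_one hs hds⟩

/-- classification: if `ξ` is nonstandard of degree `2` over `GF(q)`
with multiplicative order `n` and `q`-order `d`, then either `d = 2` and, writing
`n = 2e`, both `q` and `(q-1)/e` are odd; or `d ≥ 4` and there is a prime power `q₀`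
and an odd `t` with `q = q₀ᵗ`, `d = q₀ + 1`, `q₀ - 1 ∣ e = n/d`, and `ξ^{e/(q₀-1)}`
has multiplicative order `q₀² - 1` (a primitive element of `GF(q₀²) ⊆ GF(q²)`). -/
theorem nonstandard_degree_two_classification {F E : Type*} [Field F] [Fintype F]
    [Field E] [Fintype E] [Algebra F E] (hrank : Module.finrank F E = 2)
    (ξ : E) (hns : IsNonstandard F 2 ξ) :
    (qOrder F ξ = 2 ∧ ∃ e : ℕ, orderOf ξ = 2 * e ∧ Odd (Fintype.card F) ∧
        Odd ((Fintype.card F - 1) / e)) ∨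
    (4 ≤ qOrder F ξ ∧ ∃ q0 t : ℕ, IsPrimePow q0 ∧ Odd t ∧
        Fintype.card F = q0 ^ t ∧ qOrder F ξ = q0 + 1 ∧
        (q0 - 1) ∣ orderOf ξ / qOrder F ξ ∧
        orderOf (ξ ^ (orderOf ξ / qOrder F ξ / (q0 - 1))) = q0 ^ 2 - 1) := by
  exact nonstandard_degree_two_classification_general ξ hns
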